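/- arXiv:1201.4901 — 2 statements merged into one kernel-verified Lean document; each statement's English description precedes it below -/
import Mathlib

section
/- The Demazure product on a Coxeter group is associative: for all $x, y, z \in W$, $(x*y)*z = x*(y*z)$. -/
/-- The Bruhat order on a Coxeter group, via the subword property. -/
def CoxeterSystem.BruhatLE {B W : Type*} [Group W] {M : CoxeterMatrix B}
    (cs : CoxeterSystem M W) (u w : W) : Prop :=
  ∃ ω : List B, cs.IsReduced ω ∧ cs.wordProd ω = w ∧
    ∃ ω' : List B, ω'.Sublist ω ∧ cs.wordProd ω' = u

/-- `m` is the Demazure product of `x` and `y`: the unique Bruhat-maximal element of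
`{u u' : u ≤ x, u' ≤ y}`. -/
def CoxeterSystem.IsDemazureProd {B W : Type*} [Group W] {M : CoxeterMatrix B}
    (cs : CoxeterSystem M W) (x y m : W) : Prop :=
  (∃ u u' : W, cs.BruhatLE u x ∧ cs.BruhatLE u' y ∧ m = u * u') ∧
    ∀ z : W, (∃ u u' : W, cs.BruhatLE u x ∧ cs.BruhatLE u' y ∧ z = u * u') →
      cs.BruhatLE z m

/-!
Write `[1, w]` for the lower Bruhat interval of `w`. By the subword property `[1, u * u']` is
contained in `[1, x] * [1, y]` as soon as `u ≤ x` and `u' ≤ y`, so `m` is the Demazure product of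
`x` and `y` exactly when `[1, m] = [1, x] * [1, y]`. As the maximal element is unique,
associativity is inherited from the product of subsets of the group.

The subword property has to hold for arbitrary, possibly non-reduced, words. It comes from the
strong exchange condition, which is proved by counting modulo 2 how often a reflection `t` occurs
in the left inversion sequence of a word: this parity depends only on the group element, because
the signed conjugations `(t, ε) ↦ (s t s, ε + [t = s])` satisfy the Coxeter relations.
-/

namespace BruhatOrder

open CoxeterSystem Relation

open scoped Pointwise

variable {B W : Type*} [Group W] {M : CoxeterMatrix B} (cs : CoxeterSystem M W)

theorem leftInvSeq_alternatingWord (i j : B) (m : ℕ) :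
    cs.leftInvSeq (alternatingWord i j (2 * m)) =
      (List.range (2 * m)).map fun k ↦ cs.wordProd (alternatingWord j i (2 * k + 1)) := by
  refine List.ext_getElem (by simp) fun k hk _ ↦ ?_
  rw [cs.getElem_leftInvSeq_alternatingWord i j m k (by simpa using hk)]
  simp

theorem wordProd_alternatingWord_add_two_mul (i j : B) (m : ℕ) :
    cs.wordProd (alternatingWord i j (m + 2 * M i j)) = cs.wordProd (alternatingWord i j m) := by
  have half : (m + 2 * M i j) / 2 = m / 2 + M i j := by lia
  simp [prod_alternatingWord_eq_mul_pow, half, pow_add, Nat.even_add]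

section InversionParity

variable [DecidableEq W]

theorem even_count_leftInvSeq_alternatingWord (i j : B) (t : W) :
    Even ((cs.leftInvSeq (alternatingWord i j (2 * M i j))).count t) := by
  have periodic (k : ℕ) : cs.wordProd (alternatingWord j i (2 * (M i j + k) + 1)) =
      cs.wordProd (alternatingWord j i (2 * k + 1)) := by
    rw [← wordProd_alternatingWord_add_two_mul cs j i (2 * k + 1), M.symmetric j i]
    congr 2
    ring
  rw [leftInvSeq_alternatingWord, two_mul, List.range_add, List.map_append, List.map_map,
    List.count_append]
  simp only [Function.comp_def, periodic]
  exact Even.add_self _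

/-- Conjugation by the simple reflection `s i`, acting on group elements with a sign in `ZMod 2`
that is flipped exactly at `s i` itself. -/
def signedConj (i : B) : Function.End (W × ZMod 2) := fun p ↦
  (cs.simple i * p.1 * cs.simple i, p.2 + if p.1 = cs.simple i then 1 else 0)

theorem prod_map_signedConj_reverse_apply (ω : List B) (t : W) (e : ZMod 2) :
    (ω.reverse.map (signedConj cs)).prod (t, e) =
      ((cs.wordProd ω)⁻¹ * t * cs.wordProd ω, e + (cs.leftInvSeq ω).count t) := by
  induction ω generalizing t e with
  | nil => simp [Function.End.one_def]
  | cons i ω ih =>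
    have count_conj : ((cs.leftInvSeq ω).map (MulAut.conj (cs.simple i))).count t =
        (cs.leftInvSeq ω).count (cs.simple i * t * cs.simple i) := by
      rw [← List.count_map_of_injective _ _ (MulAut.conj (cs.simple i)).injective
        (cs.simple i * t * cs.simple i)]
      simp [mul_assoc]
    have apply_cons : ((i :: ω).reverse.map (signedConj cs)).prod (t, e) =
        (ω.reverse.map (signedConj cs)).prod (signedConj cs i (t, e)) := by
      rw [List.reverse_cons, List.map_append, List.prod_append, List.map_singleton,
        List.prod_singleton]
      rfl
    rw [apply_cons, signedConj, ih, leftInvSeq, List.count_cons, count_conj, wordProd_cons]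
    simp only [beq_iff_eq, eq_comm (a := cs.simple i), mul_inv_rev, inv_simple, mul_assoc,
      Prod.mk.injEq, true_and]
    push_cast
    ring

theorem prod_map_reverse_alternatingWord {G : Type*} [Monoid G] (f : B → G) (i j : B) (m : ℕ) :
    ((alternatingWord j i (2 * m)).reverse.map f).prod = (f i * f j) ^ m := by
  induction m with
  | zero => simp [alternatingWord]
  | succ m ih => simp [-List.map_reverse, mul_add, alternatingWord_succ, ih, pow_succ', mul_assoc]

theorem isLiftable_signedConj : M.IsLiftable (signedConj cs) := by
  intro i j
  have wordProd_eq_one : cs.wordProd (alternatingWord j i (2 * M j i)) = 1 := by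
    simp [prod_alternatingWord_eq_mul_pow]
  have count_eq_zero (t : W) :
      ((cs.leftInvSeq (alternatingWord j i (2 * M j i))).count t : ZMod 2) = 0 :=
    ZMod.natCast_eq_zero_iff_even.mpr (even_count_leftInvSeq_alternatingWord cs j i t)
  funext ⟨t, e⟩
  rw [← prod_map_reverse_alternatingWord, M.symmetric i j, prod_map_signedConj_reverse_apply,
    wordProd_eq_one, count_eq_zero]
  simp [Function.End.one_def]

/-- The action of the Coxeter group on signed group elements that extends `signedConj`. -/
def signedConjHom : W →* Function.End (W × ZMod 2) :=
  cs.lift ⟨signedConj cs, isLiftable_signedConj cs⟩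

theorem signedConjHom_wordProd (ω : List B) :
    signedConjHom cs (cs.wordProd ω) = (ω.map (signedConj cs)).prod := by
  simp [signedConjHom, wordProd, map_list_prod, Function.comp_def]

/-- The parity of the number of occurrences of `t` in the left inversion sequence of any word
for `w`. It is read off from the action of `w⁻¹`, since a product of signed conjugations applies
its last letter first whereas left inversion sequences start with the first letter. -/
def leftInversionParity (w t : W) : ZMod 2 := (signedConjHom cs w⁻¹ (t, 0)).2

theorem signedConjHom_inv_wordProd_apply (ω : List B) (t : W) (e : ZMod 2) :
    signedConjHom cs (cs.wordProd ω)⁻¹ (t, e) =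
      ((cs.wordProd ω)⁻¹ * t * cs.wordProd ω, e + (cs.leftInvSeq ω).count t) := by
  rw [← wordProd_reverse, signedConjHom_wordProd, prod_map_signedConj_reverse_apply,
    wordProd_reverse]

theorem leftInversionParity_wordProd (ω : List B) (t : W) :
    leftInversionParity cs (cs.wordProd ω) t = (cs.leftInvSeq ω).count t := by
  simp [leftInversionParity, signedConjHom_inv_wordProd_apply]

theorem signedConjHom_inv_apply (w t : W) (e : ZMod 2) :
    signedConjHom cs w⁻¹ (t, e) = (w⁻¹ * t * w, e + leftInversionParity cs w t) := by
  obtain ⟨ω, rfl⟩ := cs.wordProd_surjective w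
  rw [signedConjHom_inv_wordProd_apply, leftInversionParity_wordProd]

theorem leftInversionParity_one (t : W) : leftInversionParity cs 1 t = 0 := by
  simpa using leftInversionParity_wordProd cs [] t

theorem leftInversionParity_simple (i : B) (t : W) :
    leftInversionParity cs (cs.simple i) t = if t = cs.simple i then 1 else 0 := by
  have h := leftInversionParity_wordProd cs [i] t
  rw [wordProd_singleton, leftInvSeq_singleton, List.count_singleton] at h
  simpa only [beq_iff_eq, eq_comm (a := cs.simple i), Nat.cast_ite, Nat.cast_one,
    Nat.cast_zero] using h

theorem leftInversionParity_mul (u v t : W) :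
    leftInversionParity cs (u * v) t =
      leftInversionParity cs u t + leftInversionParity cs v (u⁻¹ * t * u) := by
  rw [leftInversionParity, mul_inv_rev, map_mul]
  change (signedConjHom cs v⁻¹ (signedConjHom cs u⁻¹ (t, 0))).2 = _
  rw [signedConjHom_inv_apply, signedConjHom_inv_apply, zero_add]

theorem leftInversionParity_self {t : W} (ht : cs.IsReflection t) :
    leftInversionParity cs t t = 1 := by
  obtain ⟨u, i, rfl⟩ := ht
  have cancel : leftInversionParity cs u (u * cs.simple i * u⁻¹) +
      leftInversionParity cs u⁻¹ (cs.simple i) = 0 := by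
    simpa [leftInversionParity_one, mul_assoc] using
      (leftInversionParity_mul cs u u⁻¹ (u * cs.simple i * u⁻¹)).symm
  have expand : leftInversionParity cs (u * cs.simple i * u⁻¹) (u * cs.simple i * u⁻¹) =
      leftInversionParity cs u (u * cs.simple i * u⁻¹) + 1 +
        leftInversionParity cs u⁻¹ (cs.simple i) := by
    simp [leftInversionParity_mul, leftInversionParity_simple, mul_assoc, add_assoc]
  linear_combination expand + cancel

theorem mem_leftInvSeq_of_leftInversionParity_eq_one {ω : List B} {t : W}
    (h : leftInversionParity cs (cs.wordProd ω) t = 1) : t ∈ cs.leftInvSeq ω := by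
  rw [leftInversionParity_wordProd] at h
  by_contra hmem
  simp [List.count_eq_zero_of_not_mem hmem] at h

theorem isLeftInversion_iff_leftInversionParity_eq_one {w t : W} :
    cs.IsLeftInversion w t ↔ leftInversionParity cs w t = 1 := by
  have of_parity {v : W} (hv : leftInversionParity cs v t = 1) : cs.IsLeftInversion v t := by
    obtain ⟨ω, hω, rfl⟩ := cs.exists_isReduced v
    exact cs.isLeftInversion_of_mem_leftInvSeq hω
      (mem_leftInvSeq_of_leftInversionParity_eq_one cs hv)
  refine ⟨fun h ↦ ?_, of_parity⟩
  have parity_mul :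
      leftInversionParity cs (t * w) t = 1 + leftInversionParity cs w t := by
    simp [leftInversionParity_mul, leftInversionParity_self cs h.1]
  by_contra hne
  have parity_eq_zero : leftInversionParity cs w t = 0 := by
    generalize leftInversionParity cs w t = a at hne
    decide +revert
  have : cs.IsLeftInversion (t * w) t := of_parity (by rw [parity_mul, parity_eq_zero, add_zero])
  exact h.1.isLeftInversion_mul_right_iff.mp this h

end InversionParity

theorem strong_exchange {ω : List B} {t : W} (h : cs.IsLeftInversion (cs.wordProd ω) t) :
    ∃ j < ω.length, t * cs.wordProd ω = cs.wordProd (ω.eraseIdx j) := by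
  classical
  obtain ⟨j, hj, rfl⟩ := List.getElem_of_mem <| mem_leftInvSeq_of_leftInversionParity_eq_one cs
    ((isLeftInversion_iff_leftInversionParity_eq_one cs).mp h)
  refine ⟨j, by simpa using hj, ?_⟩
  rw [← getD_leftInvSeq_mul_wordProd, List.getD_eq_getElem _ _ hj]

theorem isLeftInversion_simple_mul {w t : W} {i : B} (h : cs.IsLeftInversion w t)
    (hne : t ≠ cs.simple i) :
    cs.IsLeftInversion (cs.simple i * w) (cs.simple i * t * cs.simple i) := by
  classical
  have conj_ne : cs.simple i * t * cs.simple i ≠ cs.simple i := by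
    simpa [mul_eq_right, mul_eq_one_iff_inv_eq, eq_comm] using hne
  rw [isLeftInversion_iff_leftInversionParity_eq_one] at h ⊢
  rw [leftInversionParity_mul, leftInversionParity_simple, if_neg conj_ne, zero_add]
  simpa [mul_assoc] using h

/-- The elementary relations `t * w < w`, for `t` a reflection that shortens `w`, which generate
the Bruhat order. -/
def BruhatStep (u w : W) : Prop := ∃ t, cs.IsLeftInversion w t ∧ u = t * w

theorem BruhatStep.simple_mul {u w : W} (h : BruhatStep cs u w) (i : B) :
    cs.simple i * u = w ∨ BruhatStep cs (cs.simple i * u) (cs.simple i * w) := by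
  obtain ⟨t, ht, rfl⟩ := h
  by_cases heq : t = cs.simple i
  · exact .inl (by simp [heq])
  · exact .inr ⟨_, isLeftInversion_simple_mul cs ht heq, by simp [mul_assoc]⟩

theorem reflTransGen_bruhatStep_simple_mul {u w : W} (h : ReflTransGen (BruhatStep cs) u w)
    (i : B) :
    ReflTransGen (BruhatStep cs) (cs.simple i * u) w ∨
      ReflTransGen (BruhatStep cs) (cs.simple i * u) (cs.simple i * w) := by
  induction h with
  | refl => exact .inr .refl
  | tail _ hstep ih =>
    rcases ih with hle | hle
    · exact .inl (hle.tail hstep)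
    · rcases hstep.simple_mul cs i with rfl | hstep'
      · exact .inl hle
      · exact .inr (hle.tail hstep')

theorem bruhatStep_wordProd_cons {i : B} {ω : List B} (hω : cs.IsReduced (i :: ω)) :
    BruhatStep cs (cs.wordProd ω) (cs.wordProd (i :: ω)) := by
  refine ⟨cs.simple i, cs.isLeftInversion_of_mem_leftInvSeq hω ?_, ?_⟩
  · simp [leftInvSeq]
  · simp [wordProd_cons]

theorem reflTransGen_bruhatStep_of_sublist {ω ω' : List B} (hω : cs.IsReduced ω)
    (h : ω'.Sublist ω) :
    ReflTransGen (BruhatStep cs) (cs.wordProd ω') (cs.wordProd ω) := by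
  induction h with
  | slnil => exact .refl
  | cons i _ ih => exact (ih (hω.drop 1)).tail (bruhatStep_wordProd_cons cs hω)
  | cons_cons i _ ih =>
    rw [wordProd_cons]
    rcases reflTransGen_bruhatStep_simple_mul cs (ih (hω.drop 1)) i with hle | hle
    · exact hle.tail (bruhatStep_wordProd_cons cs hω)
    · rwa [wordProd_cons]

theorem exists_sublist_of_reflTransGen_bruhatStep {u : W} {ω : List B}
    (h : ReflTransGen (BruhatStep cs) u (cs.wordProd ω)) :
    ∃ ω' : List B, ω'.Sublist ω ∧ cs.wordProd ω' = u := by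
  generalize hw : cs.wordProd ω = w at h
  induction h generalizing ω with
  | refl => exact ⟨ω, .refl ω, hw⟩
  | tail _ hstep ih =>
    obtain ⟨t, ht, rfl⟩ := hstep
    subst hw
    obtain ⟨j, -, hj⟩ := strong_exchange cs ht
    obtain ⟨ω', hsub, hprod⟩ := ih hj.symm
    exact ⟨ω', hsub.trans (List.eraseIdx_sublist ..), hprod⟩

theorem exists_sublist_of_bruhatLE {u : W} {ω : List B} (h : cs.BruhatLE u (cs.wordProd ω)) :
    ∃ ω' : List B, ω'.Sublist ω ∧ cs.wordProd ω' = u := by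
  obtain ⟨ρ, hρ, hprod, ρ', hsub, rfl⟩ := h
  exact exists_sublist_of_reflTransGen_bruhatStep cs
    (hprod ▸ reflTransGen_bruhatStep_of_sublist cs hρ hsub)

theorem bruhatLE_refl (w : W) : cs.BruhatLE w w := by
  obtain ⟨ω, hω, rfl⟩ := cs.exists_isReduced w
  exact ⟨ω, hω, rfl, ω, .refl ω, rfl⟩

theorem length_le_of_bruhatLE {u w : W} (h : cs.BruhatLE u w) : cs.length u ≤ cs.length w := by
  obtain ⟨ω, hω, rfl, ω', hsub, rfl⟩ := h
  exact (cs.length_wordProd_le ω').trans (hsub.length_le.trans hω.eq.ge)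

theorem bruhatLE_antisymm {u w : W} (huw : cs.BruhatLE u w) (hwu : cs.BruhatLE w u) :
    u = w := by
  have length_le := length_le_of_bruhatLE cs hwu
  obtain ⟨ω, hω, rfl, ω', hsub, rfl⟩ := huw
  have hlen : ω.length ≤ ω'.length :=
    hω.eq.ge.trans (length_le.trans (cs.length_wordProd_le ω'))
  rw [hsub.eq_of_length_le hlen]

/-- The lower interval `[1, w]` of the Bruhat order. -/
def lowerInterval (w : W) : Set W := {u | cs.BruhatLE u w}

theorem lowerInterval_mul_subset {u u' x y : W} (hu : cs.BruhatLE u x)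
    (hu' : cs.BruhatLE u' y) :
    lowerInterval cs (u * u') ⊆ lowerInterval cs x * lowerInterval cs y := by
  intro a ha
  obtain ⟨ρ, hρ, rfl, ρ', hsub, rfl⟩ := hu
  obtain ⟨σ, hσ, rfl, σ', hsub', rfl⟩ := hu'
  rw [← wordProd_append] at ha
  obtain ⟨τ, hτ, rfl⟩ := exists_sublist_of_bruhatLE cs ha
  obtain ⟨α, β, rfl, hα, hβ⟩ := List.sublist_append_iff.mp hτ
  rw [wordProd_append]
  exact Set.mul_mem_mul ⟨ρ, hρ, rfl, α, hα.trans hsub, rfl⟩ ⟨σ, hσ, rfl, β, hβ.trans hsub', rfl⟩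

theorem isDemazureProd_iff_lowerInterval_eq {x y m : W} :
    cs.IsDemazureProd x y m ↔ lowerInterval cs m = lowerInterval cs x * lowerInterval cs y := by
  constructor
  · rintro ⟨⟨u, u', hu, hu', rfl⟩, hmax⟩
    refine (lowerInterval_mul_subset cs hu hu').antisymm ?_
    rintro _ ⟨v, hv, v', hv', rfl⟩
    exact hmax _ ⟨v, v', hv, hv', rfl⟩
  · intro h
    constructor
    · obtain ⟨u, hu, u', hu', hm⟩ := h.subset (bruhatLE_refl cs m)
      exact ⟨u, u', hu, hu', hm.symm⟩
    · rintro _ ⟨u, u', hu, hu', rfl⟩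
      exact h.superset (Set.mul_mem_mul hu hu')

theorem isDemazureProd_unique {x y m m' : W} (hm : cs.IsDemazureProd x y m)
    (hm' : cs.IsDemazureProd x y m') : m = m' :=
  bruhatLE_antisymm cs (hm'.2 m hm.1) (hm.2 m' hm'.1)

theorem isDemazureProd_assoc {x y z xy yz m : W} (hxy : cs.IsDemazureProd x y xy)
    (hyz : cs.IsDemazureProd y z yz) :
    cs.IsDemazureProd xy z m ↔ cs.IsDemazureProd x yz m := by
  rw [isDemazureProd_iff_lowerInterval_eq] at hxy hyz ⊢
  rw [isDemazureProd_iff_lowerInterval_eq, hxy, hyz, mul_assoc]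

end BruhatOrder

/-- The Demazure product is associative: `(x*y)*z = x*(y*z)`. -/
theorem stmt3 {B W : Type*} [Group W] {M : CoxeterMatrix B} (cs : CoxeterSystem M W)
    (x y z xy xy_z yz x_yz : W)
    (h1 : cs.IsDemazureProd x y xy) (h2 : cs.IsDemazureProd xy z xy_z)
    (h3 : cs.IsDemazureProd y z yz) (h4 : cs.IsDemazureProd x yz x_yz) :
    xy_z = x_yz := by
  have hx_yz : cs.IsDemazureProd x yz xy_z := (BruhatOrder.isDemazureProd_assoc cs h1 h3).mp h2
  exact BruhatOrder.isDemazureProd_unique cs hx_yz h4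
end

section
/- Let $H$ be the Iwahori-Hecke algebra of a Coxeter group over $\mathbb{Z}[v,v^{-1}]$ and $H_+$ the set of $A_+$-linear combinations of the standard basis $\{T_w\}$, where $A_+ = \mathbb{Z}_{\ge 0}[v-v^{-1}]$. Then for any $x, y \in W$: (1) $T_x T_y \in T_{xy} + H_+$; (2) $T_x T_y \in (v - v^{-1})^{\ell(x)+\ell(y)-\ell(x*y)} T_{x*y} + H_+$, where $x*y$ is the Demazure product. -/
open LaurentPolynomial

/-!
Folding a reduced word of `x` onto `y` one letter at a time, where a letter that would shorten the
product is absorbed, computes `x * y`. The computation of `T_x T_y` follows the same pattern: a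
letter that lengthens `w` sends `T_w` to `T_{sw}`, a letter that shortens it sends `T_w` to
`(v - v⁻¹) T_w + T_{sw}`. Retaining `T_{sw}` at every step gives (1); retaining the longer of the
two elements, at the cost of one factor `v - v⁻¹` for every absorbed letter, gives (2).

That the fold really is Bruhat-maximal rests on the monotonicity of `w ↦ max (w, sw)`, which comes
from the strong exchange property in the following form: `t` is a left inversion of `w` exactly
when `t` occurs an odd number of times in the left inversion sequence of any word of `w`.
-/

section InversionParity

open SemidirectProduct Multiplicative List CoxeterSystem

/-- The conjugation action of a group `W` on the functions from `W` to the group of order two,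
which is written multiplicatively so as to be usable in a semidirect product. -/
def conjArrow (W : Type*) [Group W] : W →* MulAut (W → Multiplicative (ZMod 2)) :=
  mulAutArrow.comp ConjAct.toConjAct.toMonoidHom

theorem conjArrow_apply {W : Type*} [Group W] (w : W) (f : W → Multiplicative (ZMod 2)) (t : W) :
    conjArrow W w f t = f (w⁻¹ * t * w) := by
  change f ((ConjAct.toConjAct w)⁻¹ • t) = _
  rw [← ConjAct.toConjAct_inv, ConjAct.toConjAct_smul, inv_inv]

theorem prod_map_alternatingWord_two_mul {B G : Type*} [Monoid G] (f : B → G) (i j : B) (p : ℕ) :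
    ((alternatingWord i j (2 * p)).map f).prod = (f i * f j) ^ p := by
  induction p with
  | zero => simp [alternatingWord]
  | succ p ih =>
    rw [mul_add, mul_one, alternatingWord_succ, alternatingWord_succ, pow_succ, ← ih]
    simp

variable {B W : Type*} [Group W] {M : CoxeterMatrix B} (cs : CoxeterSystem M W)

theorem leftInvSeq_alternatingWord_two_mul (i j : B) (p : ℕ) :
    cs.leftInvSeq (alternatingWord i j (2 * p)) =
      (range (2 * p)).map fun k ↦ cs.simple i * (cs.simple j * cs.simple i) ^ k := by
  refine List.ext_getElem (by simp) fun k hk _ ↦ ?_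
  have hodd : ¬ Even (2 * k + 1) := by simp
  have hdiv : (2 * k + 1) / 2 = k := by omega
  rw [cs.getElem_leftInvSeq_alternatingWord i j p k (by simpa using hk),
    cs.prod_alternatingWord_eq_mul_pow, if_neg hodd, hdiv, getElem_map, getElem_range]

variable [DecidableEq W]

-- The sequence is periodic with period `M i j`, because `(s_j s_i) ^ M i j = 1`.
theorem even_count_leftInvSeq_alternatingWord (i j : B) (t : W) :
    Even ((cs.leftInvSeq (alternatingWord i j (2 * M i j))).count t) := by
  rw [leftInvSeq_alternatingWord_two_mul, two_mul, range_add, map_append, map_map, count_append]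
  simp only [Function.comp_def, pow_add, cs.simple_mul_simple_pow', one_mul]
  exact Even.add_self _

/-- The image of the simple reflection `s_i` under `inversionHom`: its function part is the
indicator of `s_i`. -/
def inversionGenerator (i : B) : (W → Multiplicative (ZMod 2)) ⋊[conjArrow W] W :=
  ⟨Pi.mulSingle (cs.simple i) (ofAdd 1), cs.simple i⟩

theorem prod_map_inversionGenerator (ω : List B) :
    (ω.map (inversionGenerator cs)).prod =
      ⟨fun t ↦ ofAdd ((cs.leftInvSeq ω).count t : ZMod 2), cs.wordProd ω⟩ := by
  induction ω with
  | nil => rfl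
  | cons i ω ih =>
    rw [map_cons, prod_cons, ih]
    refine SemidirectProduct.ext (funext fun t ↦ ?_) (cs.wordProd_cons i ω).symm
    have hconj : ((cs.leftInvSeq ω).map (MulAut.conj (cs.simple i))).count t =
        (cs.leftInvSeq ω).count ((cs.simple i)⁻¹ * t * cs.simple i) := by
      rw [← count_map_of_injective (cs.leftInvSeq ω) _ (MulAut.conj (cs.simple i)).injective]
      simp [mul_assoc]
    simp only [mul_left, Pi.mul_apply, inversionGenerator, conjArrow_apply, leftInvSeq, count_cons,
      hconj, Nat.cast_add, ofAdd_add, Pi.mulSingle_apply]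
    rw [mul_comm]
    congr 1
    simp only [beq_iff_eq, eq_comm (a := t)]
    split_ifs <;> rfl

theorem isLiftable_inversionGenerator : M.IsLiftable (inversionGenerator cs) := by
  intro i j
  rw [← prod_map_alternatingWord_two_mul, prod_map_inversionGenerator]
  refine SemidirectProduct.ext (funext fun t ↦ ?_) ?_
  · exact congrArg ofAdd
      ((ZMod.natCast_eq_zero_iff_even).2 (even_count_leftInvSeq_alternatingWord cs i j t))
  · simp [cs.prod_alternatingWord_eq_mul_pow]

/-- The crossed homomorphism sending `w` to the parity of its inversion sequences, encoded as a
homomorphism to a semidirect product. -/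
def inversionHom : W →* (W → Multiplicative (ZMod 2)) ⋊[conjArrow W] W :=
  cs.lift ⟨inversionGenerator cs, isLiftable_inversionGenerator cs⟩

theorem inversionHom_wordProd (ω : List B) :
    inversionHom cs (cs.wordProd ω) =
      ⟨fun t ↦ ofAdd ((cs.leftInvSeq ω).count t : ZMod 2), cs.wordProd ω⟩ := by
  rw [← prod_map_inversionGenerator, wordProd, map_list_prod, map_map]
  congr 2
  exact funext fun i ↦ cs.lift_apply_simple (isLiftable_inversionGenerator cs) i

/-- The number of occurrences, modulo two, of `t` in the left inversion sequence of a word of `w`;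
it does not depend on the word. -/
def inversionParity (w t : W) : ZMod 2 := toAdd ((inversionHom cs w).left t)

theorem inversionParity_wordProd (ω : List B) (t : W) :
    inversionParity cs (cs.wordProd ω) t = (cs.leftInvSeq ω).count t := by
  rw [inversionParity, inversionHom_wordProd, toAdd_ofAdd]

theorem inversionParity_one (t : W) : inversionParity cs 1 t = 0 := by
  simpa using inversionParity_wordProd cs [] t

theorem inversionParity_simple (i : B) (t : W) :
    inversionParity cs (cs.simple i) t = if t = cs.simple i then 1 else 0 := by
  simpa [count_singleton, eq_comm (a := t)] using inversionParity_wordProd cs [i] t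

theorem inversionParity_mul (u w t : W) :
    inversionParity cs (u * w) t =
      inversionParity cs u t + inversionParity cs w (u⁻¹ * t * u) := by
  have hright : (inversionHom cs u).right = u := by
    obtain ⟨ω, rfl⟩ := cs.wordProd_surjective u
    rw [inversionHom_wordProd]
  rw [inversionParity, map_mul, mul_left, Pi.mul_apply, conjArrow_apply, hright, toAdd_mul]
  rfl

theorem inversionParity_self {t : W} (ht : cs.IsReflection t) : inversionParity cs t t = 1 := by
  obtain ⟨u, i, rfl⟩ := ht
  set t := u * cs.simple i * u⁻¹ with ht
  have hconj : u⁻¹ * t * u = cs.simple i := by simp [ht, mul_assoc]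
  have hcancel : inversionParity cs u t + inversionParity cs u⁻¹ (cs.simple i) = 0 := by
    rw [← inversionParity_one cs t, ← mul_inv_cancel u, inversionParity_mul, hconj]
  calc inversionParity cs (u * cs.simple i * u⁻¹) t
      = inversionParity cs u t + 1 + inversionParity cs u⁻¹ (cs.simple i) := by
        rw [mul_assoc, inversionParity_mul, inversionParity_mul, hconj, inversionParity_simple,
          if_pos rfl, inv_mul_cancel, one_mul, add_assoc]
    _ = 1 := by rw [add_right_comm, hcancel, zero_add]

theorem isLeftInversion_of_inversionParity_eq_one {w t : W} (h : inversionParity cs w t = 1) :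
    cs.IsLeftInversion w t := by
  obtain ⟨ω, hω, rfl⟩ := cs.exists_isReduced w
  refine cs.isLeftInversion_of_mem_leftInvSeq hω (count_pos_iff.1 (Odd.pos ?_))
  rwa [inversionParity_wordProd, ZMod.natCast_eq_one_iff_odd] at h

theorem isLeftInversion_iff_inversionParity {w t : W} :
    cs.IsLeftInversion w t ↔ cs.IsReflection t ∧ inversionParity cs w t = 1 := by
  refine ⟨fun h ↦ ⟨h.1, ?_⟩, fun h ↦ isLeftInversion_of_inversionParity_eq_one cs h.2⟩
  by_contra hne
  have hzero : inversionParity cs w t = 0 := (by decide : ∀ a : ZMod 2, a ≠ 1 → a = 0) _ hne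
  have hone : inversionParity cs (t * w) t = 1 := by
    rw [inversionParity_mul, inversionParity_self cs h.1, inv_mul_cancel, one_mul, hzero, add_zero]
  exact h.1.isLeftInversion_mul_right_iff.1 (isLeftInversion_of_inversionParity_eq_one cs hone) h

end InversionParity

section BruhatChain

variable {B W : Type*} [Group W] {M : CoxeterMatrix B} (cs : CoxeterSystem M W)

theorem isLeftInversion_simple_mul {w t : W} {i : B} (ht : t ≠ cs.simple i)
    (h : cs.IsLeftInversion w t) :
    cs.IsLeftInversion (cs.simple i * w) (cs.simple i * t * cs.simple i) := by
  classical
  rw [isLeftInversion_iff_inversionParity] at h ⊢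
  refine ⟨by simpa using h.1.conj (cs.simple i), ?_⟩
  have hne : cs.simple i * t * cs.simple i ≠ cs.simple i := by
    simpa [mul_assoc, mul_eq_one_iff_eq_inv] using ht
  rw [inversionParity_mul, inversionParity_simple, if_neg hne, zero_add]
  simpa [mul_assoc] using h.2

/-- The Bruhat order in its reflection form: `u` is obtained from `w` by left multiplications by
reflections, each of which lowers the length. -/
def BruhatChain : W → W → Prop :=
  Relation.ReflTransGen fun u w ↦ ∃ t, cs.IsLeftInversion w t ∧ u = t * w

open Classical in
/-- The Demazure product of the simple reflection `s_i` with `w`, that is, the longer of `w` and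
`s_i w`. -/
noncomputable def demazureSimpleMul (i : B) (w : W) : W :=
  if cs.IsLeftDescent w i then w else cs.simple i * w

/-- The Demazure product `s_{i_1} * (⋯ * (s_{i_k} * y))` for the word `ω = [i_1, …, i_k]`. -/
noncomputable def demazureAct (ω : List B) (y : W) : W := ω.foldr (demazureSimpleMul cs) y

variable {cs}

theorem demazureSimpleMul_of_isLeftDescent {i : B} {w : W} (h : cs.IsLeftDescent w i) :
    demazureSimpleMul cs i w = w :=
  if_pos h

theorem demazureSimpleMul_of_not_isLeftDescent {i : B} {w : W} (h : ¬cs.IsLeftDescent w i) :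
    demazureSimpleMul cs i w = cs.simple i * w :=
  if_neg h

theorem demazureAct_nil (y : W) : demazureAct cs [] y = y :=
  rfl

theorem demazureAct_cons (i : B) (ω : List B) (y : W) :
    demazureAct cs (i :: ω) y = demazureSimpleMul cs i (demazureAct cs ω y) :=
  rfl

theorem BruhatChain.length_le {u w : W} (h : BruhatChain cs u w) :
    cs.length u ≤ cs.length w := by
  induction h with
  | refl => exact le_rfl
  | tail _ hstep ih =>
    obtain ⟨t, ht, rfl⟩ := hstep
    exact ih.trans ht.2.le

theorem bruhatChain_simple_mul_of_isLeftDescent {i : B} {w : W} (h : cs.IsLeftDescent w i) :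
    BruhatChain cs (cs.simple i * w) w :=
  .single ⟨cs.simple i, (cs.isLeftInversion_simple_iff_isLeftDescent w i).2 h, rfl⟩

theorem bruhatChain_simple_mul_demazureSimpleMul (i : B) (w : W) :
    BruhatChain cs (cs.simple i * w) (demazureSimpleMul cs i w) := by
  by_cases h : cs.IsLeftDescent w i
  · rw [demazureSimpleMul_of_isLeftDescent h]
    exact bruhatChain_simple_mul_of_isLeftDescent h
  · rw [demazureSimpleMul_of_not_isLeftDescent h]
    exact .refl

theorem bruhatChain_demazureSimpleMul (i : B) (w : W) :
    BruhatChain cs w (demazureSimpleMul cs i w) := by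
  by_cases h : cs.IsLeftDescent w i
  · rw [demazureSimpleMul_of_isLeftDescent h]
    exact .refl
  · rw [demazureSimpleMul_of_not_isLeftDescent h]
    rw [cs.isLeftDescent_iff_not_isLeftDescent_mul, not_not] at h
    simpa using bruhatChain_simple_mul_of_isLeftDescent h

theorem BruhatChain.simple_mul {u w : W} (h : BruhatChain cs u w) (i : B) :
    BruhatChain cs (cs.simple i * u) (demazureSimpleMul cs i w) := by
  induction h using Relation.ReflTransGen.head_induction_on with
  | refl => exact bruhatChain_simple_mul_demazureSimpleMul i w
  | @head u c hstep hchain ih =>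
    obtain ⟨t, ht, rfl⟩ := hstep
    by_cases hti : t = cs.simple i
    · rw [hti, cs.simple_mul_simple_cancel_left]
      exact hchain.trans (bruhatChain_demazureSimpleMul i w)
    · exact .head ⟨_, isLeftInversion_simple_mul cs hti ht, by simp [mul_assoc]⟩ ih

theorem BruhatChain.wordProd_mul {u w : W} (h : BruhatChain cs u w) {ω' ω : List B}
    (hω : ω'.Sublist ω) : BruhatChain cs (cs.wordProd ω' * u) (demazureAct cs ω w) := by
  induction hω with
  | slnil => rwa [cs.wordProd_nil, one_mul]
  | cons i _ ih => exact ih.trans (bruhatChain_demazureSimpleMul i _)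
  | cons_cons i _ ih =>
    rw [cs.wordProd_cons, mul_assoc]
    exact ih.simple_mul i

end BruhatChain

section DemazureProduct

variable {B W : Type*} [Group W] {M : CoxeterMatrix B} {cs : CoxeterSystem M W}

theorem not_isLeftDescent_of_isReduced_cons {i : B} {ω : List B} (h : cs.IsReduced (i :: ω)) :
    ¬cs.IsLeftDescent (cs.wordProd ω) i := by
  have hω : cs.IsReduced ω := h.drop 1
  rw [cs.not_isLeftDescent_iff, ← cs.wordProd_cons, h.eq, hω.eq, List.length_cons]

theorem demazureAct_one_of_isReduced {ω : List B} (h : cs.IsReduced ω) :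
    demazureAct cs ω 1 = cs.wordProd ω := by
  induction ω with
  | nil => exact cs.wordProd_nil.symm
  | cons i ω ih =>
    have hω : cs.IsReduced ω := h.drop 1
    rw [demazureAct_cons, ih hω, cs.wordProd_cons,
      demazureSimpleMul_of_not_isLeftDescent (not_isLeftDescent_of_isReduced_cons h)]

theorem exists_sublist_demazureAct_eq (ω : List B) (y : W) :
    ∃ ω' : List B, ω'.Sublist ω ∧ demazureAct cs ω y = cs.wordProd ω' * y := by
  induction ω with
  | nil => exact ⟨[], .slnil, by rw [demazureAct_nil, cs.wordProd_nil, one_mul]⟩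
  | cons i ω ih =>
    obtain ⟨ω', hsub, heq⟩ := ih
    rw [demazureAct_cons]
    by_cases h : cs.IsLeftDescent (demazureAct cs ω y) i
    · exact ⟨ω', hsub.cons i, by rw [demazureSimpleMul_of_isLeftDescent h, heq]⟩
    · exact ⟨i :: ω', hsub.cons_cons i, by
        rw [demazureSimpleMul_of_not_isLeftDescent h, heq, cs.wordProd_cons, mul_assoc]⟩

theorem eq_of_bruhatLE_of_length_le {u w : W} (h : cs.BruhatLE u w)
    (hlen : cs.length w ≤ cs.length u) : u = w := by
  obtain ⟨ω, hω, rfl, ω', hsub, rfl⟩ := h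
  have hle : ω.length ≤ ω'.length :=
    hω.eq.symm.le.trans (hlen.trans (cs.length_wordProd_le ω'))
  rw [hsub.eq_of_length_le hle]

theorem exists_demazureAct_eq_of_isDemazureProd {x y m : W} (hm : cs.IsDemazureProd x y m) :
    ∃ ω : List B, cs.IsReduced ω ∧ cs.wordProd ω = x ∧ demazureAct cs ω y = m := by
  obtain ⟨⟨_, _, ⟨ω, hω, rfl, ω', hω', rfl⟩, ⟨ρ, hρ, rfl, ρ', hρ', rfl⟩, rfl⟩, hmax⟩ := hm
  refine ⟨ω, hω, rfl, ?_⟩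
  have hchain : BruhatChain cs (cs.wordProd ρ') (cs.wordProd ρ) := by
    simpa [demazureAct_one_of_isReduced hρ] using
      BruhatChain.wordProd_mul (cs := cs) (.refl : BruhatChain cs 1 1) hρ'
  obtain ⟨α, hα, heq⟩ := exists_sublist_demazureAct_eq (cs := cs) ω (cs.wordProd ρ)
  exact eq_of_bruhatLE_of_length_le
    (hmax _ ⟨_, _, ⟨ω, hω, rfl, α, hα, rfl⟩, ⟨ρ, hρ, rfl, ρ, .refl ρ, rfl⟩, heq⟩)
    (hchain.wordProd_mul hω').length_le

end DemazureProduct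

section PositiveSpan

variable {W H : Type*} [Semiring H]

/-- The analogue of `H₊` for a family `TT`: the span of `TT` with coefficients that are
polynomials in `q` over the natural numbers. -/
def positiveSpan (q : H) (TT : W → H) : AddSubmonoid H :=
  AddSubmonoid.closure {h : H | ∃ (n : ℕ) (w : W), h = q ^ n * TT w}

theorem pow_mul_mem_positiveSpan (q : H) (TT : W → H) (n : ℕ) (w : W) :
    q ^ n * TT w ∈ positiveSpan q TT :=
  AddSubmonoid.subset_closure ⟨n, w, rfl⟩

theorem pow_mul_mem_positiveSpan_of_mem {q : H} {TT : W → H} (n : ℕ) {h : H}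
    (hh : h ∈ positiveSpan q TT) : q ^ n * h ∈ positiveSpan q TT := by
  induction hh using AddSubmonoid.closure_induction with
  | mem h hh =>
    obtain ⟨k, w, rfl⟩ := hh
    rw [← mul_assoc, ← pow_add]
    exact pow_mul_mem_positiveSpan q TT (n + k) w
  | zero => simp
  | add a b _ _ ha hb => rw [mul_add]; exact add_mem ha hb

end PositiveSpan

section Hecke

variable {B W H : Type*} [Group W] {M : CoxeterMatrix B} [Semiring H]

/-- The defining relations of the Hecke algebra with parameter `q`, that is, `v - v⁻¹`, as
conditions on a family `TT` of elements of a semiring. -/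
structure IsHeckeFamily (cs : CoxeterSystem M W) (q : H) (TT : W → H) : Prop where
  one : TT 1 = 1
  mul_of_length_mul : ∀ x y : W, cs.length (x * y) = cs.length x + cs.length y →
    TT x * TT y = TT (x * y)
  simple_mul_self : ∀ i : B, TT (cs.simple i) * TT (cs.simple i) = q * TT (cs.simple i) + 1
  commute_simple : ∀ i : B, Commute q (TT (cs.simple i))

namespace IsHeckeFamily

variable {cs : CoxeterSystem M W} {q : H} {TT : W → H}

theorem simple_mul_of_not_isLeftDescent (hT : IsHeckeFamily cs q TT)
    {i : B} {w : W} (h : ¬cs.IsLeftDescent w i) :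
    TT (cs.simple i) * TT w = TT (cs.simple i * w) :=
  hT.mul_of_length_mul _ _ (by
    rw [cs.not_isLeftDescent_iff.1 h, cs.length_simple, add_comm])

theorem simple_mul_of_isLeftDescent (hT : IsHeckeFamily cs q TT)
    {i : B} {w : W} (h : cs.IsLeftDescent w i) :
    TT (cs.simple i) * TT w = q * TT w + TT (cs.simple i * w) := by
  have hw : TT (cs.simple i) * TT (cs.simple i * w) = TT w := by
    rw [hT.simple_mul_of_not_isLeftDescent (cs.isLeftDescent_iff_not_isLeftDescent_mul.1 h),
      cs.simple_mul_simple_cancel_left]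
  calc TT (cs.simple i) * TT w
      = TT (cs.simple i) * TT (cs.simple i) * TT (cs.simple i * w) := by rw [mul_assoc, hw]
    _ = q * TT w + TT (cs.simple i * w) := by
      rw [hT.simple_mul_self, add_mul, one_mul, mul_assoc, hw]

theorem wordProd_cons (hT : IsHeckeFamily cs q TT)
    {i : B} {ω : List B} (h : cs.IsReduced (i :: ω)) :
    TT (cs.wordProd (i :: ω)) = TT (cs.simple i) * TT (cs.wordProd ω) := by
  rw [hT.simple_mul_of_not_isLeftDescent (not_isLeftDescent_of_isReduced_cons h), cs.wordProd_cons]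

theorem exists_simple_mul_eq_simple_mul_add (hT : IsHeckeFamily cs q TT) (i : B) (w : W) :
    ∃ h ∈ positiveSpan q TT, TT (cs.simple i) * TT w = TT (cs.simple i * w) + h := by
  by_cases hw : cs.IsLeftDescent w i
  · exact ⟨q * TT w, by simpa using pow_mul_mem_positiveSpan q TT 1 w, by
      rw [hT.simple_mul_of_isLeftDescent hw, add_comm]⟩
  · exact ⟨0, zero_mem _, by rw [hT.simple_mul_of_not_isLeftDescent hw, add_zero]⟩

theorem exists_simple_mul_eq_pow_mul_demazureSimpleMul_add (hT : IsHeckeFamily cs q TT)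
    (i : B) (w : W) :
    ∃ n, n + cs.length (demazureSimpleMul cs i w) = cs.length w + 1 ∧
      ∃ h ∈ positiveSpan q TT,
        TT (cs.simple i) * TT w = q ^ n * TT (demazureSimpleMul cs i w) + h := by
  by_cases hw : cs.IsLeftDescent w i
  · rw [demazureSimpleMul_of_isLeftDescent hw]
    exact ⟨1, add_comm _ _, TT (cs.simple i * w), by
      simpa using pow_mul_mem_positiveSpan q TT 0 (cs.simple i * w), by
      rw [pow_one, hT.simple_mul_of_isLeftDescent hw]⟩
  · rw [demazureSimpleMul_of_not_isLeftDescent hw]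
    exact ⟨0, by rw [zero_add, cs.not_isLeftDescent_iff.1 hw], 0, zero_mem _, by
      rw [pow_zero, one_mul, add_zero, hT.simple_mul_of_not_isLeftDescent hw]⟩

theorem simple_mul_pow_mul (hT : IsHeckeFamily cs q TT) (i : B) (n : ℕ) (h : H) :
    TT (cs.simple i) * (q ^ n * h) = q ^ n * (TT (cs.simple i) * h) := by
  rw [← mul_assoc, ← ((hT.commute_simple i).pow_left n).eq, mul_assoc]

theorem simple_mul_mem_positiveSpan (hT : IsHeckeFamily cs q TT)
    (i : B) {h : H} (hh : h ∈ positiveSpan q TT) :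
    TT (cs.simple i) * h ∈ positiveSpan q TT := by
  induction hh using AddSubmonoid.closure_induction with
  | mem h hh =>
    obtain ⟨n, w, rfl⟩ := hh
    obtain ⟨r, hr, heq⟩ := hT.exists_simple_mul_eq_simple_mul_add i w
    rw [hT.simple_mul_pow_mul, heq, mul_add]
    exact add_mem (pow_mul_mem_positiveSpan q TT n _) (pow_mul_mem_positiveSpan_of_mem n hr)
  | zero => simp
  | add a b _ _ ha hb => rw [mul_add]; exact add_mem ha hb

theorem exists_mul_eq_mul_add (hT : IsHeckeFamily cs q TT) (x y : W) :
    ∃ h ∈ positiveSpan q TT, TT x * TT y = TT (x * y) + h := by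
  obtain ⟨ω, hω, rfl⟩ := cs.exists_isReduced x
  induction ω with
  | nil => exact ⟨0, zero_mem _, by simp [hT.one]⟩
  | cons i ω ih =>
    obtain ⟨h, hh, hprod⟩ := ih (hω.drop 1)
    obtain ⟨r, hr, hsimple⟩ := hT.exists_simple_mul_eq_simple_mul_add i (cs.wordProd ω * y)
    refine ⟨r + TT (cs.simple i) * h, add_mem hr (hT.simple_mul_mem_positiveSpan i hh), ?_⟩
    rw [hT.wordProd_cons hω, mul_assoc, hprod, mul_add, hsimple, cs.wordProd_cons, mul_assoc,
      add_assoc]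

theorem exists_wordProd_mul_eq_pow_mul_demazureAct_add (hT : IsHeckeFamily cs q TT)
    {ω : List B} (hω : cs.IsReduced ω) (y : W) :
    ∃ n, n + cs.length (demazureAct cs ω y) = ω.length + cs.length y ∧
      ∃ h ∈ positiveSpan q TT,
        TT (cs.wordProd ω) * TT y = q ^ n * TT (demazureAct cs ω y) + h := by
  induction ω with
  | nil => exact ⟨0, by simp [demazureAct_nil], 0, zero_mem _, by simp [hT.one, demazureAct_nil]⟩
  | cons i ω ih =>
    obtain ⟨n, hn, h, hh, hprod⟩ := ih (hω.drop 1)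
    obtain ⟨k, hk, r, hr, hsimple⟩ :=
      hT.exists_simple_mul_eq_pow_mul_demazureSimpleMul_add i (demazureAct cs ω y)
    refine ⟨n + k, by rw [demazureAct_cons, List.length_cons]; omega,
      q ^ n * r + TT (cs.simple i) * h,
      add_mem (pow_mul_mem_positiveSpan_of_mem n hr) (hT.simple_mul_mem_positiveSpan i hh), ?_⟩
    rw [hT.wordProd_cons hω, mul_assoc, hprod, mul_add, hT.simple_mul_pow_mul, hsimple,
      demazureAct_cons, mul_add, ← mul_assoc, ← pow_add, add_assoc]

end IsHeckeFamily

theorem stmt6_general {cs : CoxeterSystem M W} {q : H} {TT : W → H}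
    (hT : IsHeckeFamily cs q TT) {x y m : W} (hm : cs.IsDemazureProd x y m) :
    (∃ h ∈ positiveSpan q TT, TT x * TT y = TT (x * y) + h) ∧
    (∃ h ∈ positiveSpan q TT,
      TT x * TT y = q ^ (cs.length x + cs.length y - cs.length m) * TT m + h) := by
  refine ⟨hT.exists_mul_eq_mul_add x y, ?_⟩
  obtain ⟨ω, hω, rfl, rfl⟩ := exists_demazureAct_eq_of_isDemazureProd hm
  obtain ⟨n, hn, hprod⟩ := hT.exists_wordProd_mul_eq_pow_mul_demazureAct_add hω y
  rwa [hω.eq, ← hn, Nat.add_sub_cancel]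

end Hecke

/-- In the Hecke algebra with `H₊` the `ℤ≥0[v-v⁻¹]`-span of the standard
basis: (1) `T_x T_y ∈ T_{xy} + H₊`; (2) `T_x T_y ∈ (v-v⁻¹)^{ℓ(x)+ℓ(y)-ℓ(x*y)} T_{x*y} + H₊`
where `x*y` is the Demazure product. -/
theorem stmt6 {B W : Type*} [Group W] {M : CoxeterMatrix B} (cs : CoxeterSystem M W)
    (H : Type*) [Ring H] [Algebra (LaurentPolynomial ℤ) H]
    (TT : W → H) (hone : TT 1 = 1)
    (hmul : ∀ x y : W, cs.length (x * y) = cs.length x + cs.length y →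
      TT x * TT y = TT (x * y))
    (hquad : ∀ i : B, TT (cs.simple i) * TT (cs.simple i) =
      algebraMap (LaurentPolynomial ℤ) H (T 1 - T (-1)) * TT (cs.simple i) + 1)
    (Hplus : AddSubmonoid H)
    (hHplus : Hplus = AddSubmonoid.closure
      {h : H | ∃ (n : ℕ) (w : W),
        h = algebraMap (LaurentPolynomial ℤ) H ((T 1 - T (-1)) ^ n) * TT w})
    (x y m : W) (hm : cs.IsDemazureProd x y m) :
    (∃ h ∈ Hplus, TT x * TT y = TT (x * y) + h) ∧
    (∃ h ∈ Hplus, TT x * TT y =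
      algebraMap (LaurentPolynomial ℤ) H
        ((T 1 - T (-1)) ^ (cs.length x + cs.length y - cs.length m)) * TT m + h) := by
  simpa only [hHplus, map_pow, positiveSpan] using
    stmt6_general ⟨hone, hmul, hquad, fun i ↦ Algebra.commutes _ (TT (cs.simple i))⟩ hm
end
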